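/- For every integer n ≥ 1, every real α > 1, and every WARM weight p on [n], the set of linearly stable equilibria is finite; that is, the set {v ∈ Δ_n : F(v) = 0 and every complex eigenvalue of D(v) has negative real part} is a finite set. -/

import Mathlib

open Finset

noncomputable section

/-- Membership in the simplex `Δ`. -/
def InSimplex {ι : Type*} [Fintype ι] (v : ι → ℝ) : Prop :=
  (∀ i, 0 ≤ v i) ∧ ∑ i, v i = 1

/-- A WARM weight: a probability distribution on the subsets of the colour set,
giving no mass to the empty set. -/
def IsWarmWeight {ι : Type*} [Fintype ι] [DecidableEq ι] (p : Finset ι → ℝ) : Prop :=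
  p ∅ = 0 ∧ (∀ A, 0 ≤ p A ∧ p A ≤ 1) ∧ ∑ A : Finset ι, p A = 1

/-- The WARM vector field `F`. -/
def warmF {ι : Type*} [Fintype ι] [DecidableEq ι] (α : ℝ) (p : Finset ι → ℝ)
    (v : ι → ℝ) (i : ι) : ℝ :=
  -v i + ∑ A ∈ Finset.univ.filter (fun A : Finset ι => i ∈ A),
      p A * v i ^ α / (∑ j ∈ A, v j ^ α)

/-- The Jacobian matrix `D(v)`. -/
def warmD {ι : Type*} [Fintype ι] [DecidableEq ι] (α : ℝ) (p : Finset ι → ℝ)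
    (v : ι → ℝ) : Matrix ι ι ℝ :=
  Matrix.of fun i k =>
    if i = k then
      -1 + α * v i ^ (α - 1) *
        ∑ A ∈ Finset.univ.filter (fun A : Finset ι => i ∈ A),
          p A * ((∑ j ∈ A, v j ^ α) - v i ^ α) / (∑ j ∈ A, v j ^ α) ^ 2
    else
      -(α * v k ^ (α - 1) * v i ^ α *
        ∑ A ∈ Finset.univ.filter (fun A : Finset ι => i ∈ A ∧ k ∈ A),
          p A / (∑ j ∈ A, v j ^ α) ^ 2)

/-- `μ ∈ ℂ` is an eigenvalue of the real matrix `M`, i.e. a root of its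
characteristic polynomial. -/
def IsEigenvalue {ι : Type*} [Fintype ι] [DecidableEq ι] (M : Matrix ι ι ℝ) (μ : ℂ) : Prop :=
  (M.charpoly.map (algebraMap ℝ ℂ)).IsRoot μ

/-- Linear stability: every complex eigenvalue has negative real part. -/
def LinStable {ι : Type*} [Fintype ι] [DecidableEq ι] (M : Matrix ι ι ℝ) : Prop :=
  ∀ μ : ℂ, IsEigenvalue M μ → μ.re < 0

/-- Linear instability: some eigenvalue has positive real part. -/
def LinUnstable {ι : Type*} [Fintype ι] [DecidableEq ι] (M : Matrix ι ι ℝ) : Prop :=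
  ∃ μ : ℂ, IsEigenvalue M μ ∧ 0 < μ.re

/-- Critical: neither linearly stable nor linearly unstable. -/
def CriticalPt {ι : Type*} [Fintype ι] [DecidableEq ι] (M : Matrix ι ι ℝ) : Prop :=
  ¬ LinStable M ∧ ¬ LinUnstable M

/-!
The key fact is that zeros of an analytic map `F` at which the derivative is injective never
accumulate at a point `w` where `F` is analytic, however degenerate `F` may be at `w`. Follow such
zeros `x` along an ultrafilter that converges to `w`. The analytic germs that vanish along the
ultrafilter form a prime ideal, and Weierstrass division shows, by induction on the dimension, that
there is a vector field `ξ ≠ 0` along `x` such that every germ vanishing at `x` along the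
ultrafilter also satisfies `df(x) ξ = 0`. In the inductive step `x = (x', t)`: either no germ
constrains `t` and `ξ` can be taken vertical, or `t` is a root of a polynomial over the germs at
`x'` and the tangent vector at `x'` lifts as in a separable algebraic extension. In terms of dual
numbers, the points `x + ε ξ` are again zeros of the ideal. Applied to the components of `F`, this
contradicts the injectivity of the derivative at `x`.

Weierstrass division by a germ `f (v, t)` is linear algebra on a Banach space of power series in
`t`: multiplication by `f (v, ·)` is a bounded operator, analytic in `v`, obtained by substituting
the multiplication operators of the coordinates into the power series of `f`, and dividing amounts
to inverting it after the first `d` coefficients are dropped.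

The matrix `D` becomes symmetric after a diagonal conjugation, so at a stable equilibrium its
diagonal entries are negative, and this bounds the nonzero coordinates of stable equilibria from
below. Hence near a point `w` of accumulation all stable equilibria have the support `S` of `w`.
The vector field on the face of `S` extends analytically to a neighbourhood of `w`, and its
derivative at the stable equilibria is `D`, which is invertible. So stable equilibria do not
accumulate, and they lie in a compact set.
-/

open Filter Topology

section NoncommutativeSubstitution

variable {𝕜 E L W ι : Type*} [NontriviallyNormedField 𝕜] [NormedAddCommGroup E] [NormedSpace 𝕜 E]
  [NormedRing L] [NormedAlgebra 𝕜 L] [NormedAddCommGroup W] [NormedSpace 𝕜 W]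
  [Fintype ι] (b : Module.Basis ι 𝕜 E)

/-- The power series obtained from a scalar power series `p` on `E` by substituting elements of a
normed algebra `L`, which need not commute, for the coordinates in the basis `b`. The order of the
factors in each monomial is the order of the arguments of `p n`. -/
def ncSubst (L : Type*) [NormedRing L] [NormedAlgebra 𝕜 L] (p : FormalMultilinearSeries 𝕜 E 𝕜) :
    FormalMultilinearSeries 𝕜 (ι → L) L := fun n =>
  ∑ j : Fin n → ι, p n (fun i => b (j i)) •
    (ContinuousMultilinearMap.mkPiAlgebraFin 𝕜 n L).compContinuousLinearMap
      fun i => ContinuousLinearMap.proj (R := 𝕜) (φ := fun _ : ι => L) (j i)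

theorem ncSubst_apply (p : FormalMultilinearSeries 𝕜 E 𝕜) (n : ℕ) (m : Fin n → ι → L) :
    ncSubst b L p n m =
      ∑ j : Fin n → ι, p n (fun i => b (j i)) • (List.ofFn fun i => m i (j i)).prod := by
  simp [ncSubst]

theorem norm_ncSubst_le [NormOneClass L] (p : FormalMultilinearSeries 𝕜 E 𝕜) (n : ℕ) :
    ‖ncSubst b L p n‖ ≤ ‖p n‖ * (∑ i, ‖b i‖) ^ n := by
  refine ContinuousMultilinearMap.opNorm_le_bound (by positivity) fun m => ?_
  have norm_prod_le (j : Fin n → ι) : ‖(List.ofFn fun i => m i (j i)).prod‖ ≤ ∏ i, ‖m i‖ := by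
    have h := (ContinuousMultilinearMap.mkPiAlgebraFin 𝕜 n L).le_opNorm fun i => m i (j i)
    rw [ContinuousMultilinearMap.norm_mkPiAlgebraFin, one_mul,
      ContinuousMultilinearMap.mkPiAlgebraFin_apply] at h
    exact h.trans (prod_le_prod (fun _ _ => norm_nonneg _) fun i _ => norm_le_pi_norm _ _)
  calc ‖ncSubst b L p n m‖
      ≤ ∑ j : Fin n → ι, ‖p n fun i => b (j i)‖ * ‖(List.ofFn fun i => m i (j i)).prod‖ := by
        rw [ncSubst_apply]
        exact norm_sum_le_of_le _ fun j _ => norm_smul_le _ _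
    _ ≤ ∑ j : Fin n → ι, ‖p n‖ * (∏ i, ‖b (j i)‖) * ∏ i, ‖m i‖ := by
        gcongr with j
        · exact (p n).le_opNorm _
        · exact norm_prod_le j
    _ = ‖p n‖ * (∑ i, ‖b i‖) ^ n * ∏ i, ‖m i‖ := by
        rw [← sum_mul, ← mul_sum, Fintype.sum_pow]

theorem ncSubst_radius_pos [NormOneClass L] {p : FormalMultilinearSeries 𝕜 E 𝕜}
    (hp : 0 < p.radius) :
    0 < (ncSubst b L p).radius := by
  obtain ⟨C, r, -, hr, hCr⟩ := p.le_mul_pow_of_radius_pos hp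
  set k : NNReal := ∑ i, ‖b i‖₊ + 1
  have hk : ∑ i, ‖b i‖ ≤ k := by simp [k]
  have hk_pos : 0 < k := by positivity
  have hs : 0 < (r.toNNReal * k)⁻¹ := inv_pos.2 (mul_pos (Real.toNNReal_pos.2 hr) hk_pos)
  refine lt_of_lt_of_le (ENNReal.coe_pos.2 hs) ?_
  refine FormalMultilinearSeries.le_radius_of_bound _ C fun n => ?_
  calc ‖ncSubst b L p n‖ * (((r.toNNReal * k)⁻¹ : NNReal) : ℝ) ^ n
      ≤ C * r ^ n * k ^ n * (((r.toNNReal * k)⁻¹ : NNReal) : ℝ) ^ n := by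
        gcongr
        refine (norm_ncSubst_le b p n).trans ?_
        have := hCr n
        gcongr
        exact (norm_nonneg _).trans this
    _ = C := by
        rw [mul_assoc, mul_assoc, ← mul_pow, ← mul_pow]
        push_cast
        rw [Real.coe_toNNReal r hr.le, ← mul_assoc, mul_inv_cancel₀ (by positivity)]
        simp

theorem map_ncSubst_apply {a : ι → L} {x : E} {φ : L →L[𝕜] W}
    (hφ : ∀ i c, φ (a i * c) = b.repr x i • φ c) (p : FormalMultilinearSeries 𝕜 E 𝕜) (n : ℕ) :
    φ (ncSubst b L p n fun _ => a) = p n (fun _ => x) • φ 1 := by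
  have map_monomial : ∀ (n : ℕ) (j : Fin n → ι),
      φ (List.ofFn fun i => a (j i)).prod = (∏ i, b.repr x (j i)) • φ 1 := by
    intro n
    induction n with
    | zero => simp
    | succ n ih =>
      intro j
      rw [List.ofFn_succ, List.prod_cons, hφ, ih, Fin.prod_univ_succ, mul_smul]
  have expand : p n (fun _ => x) =
      ∑ j : Fin n → ι, (∏ i, b.repr x (j i)) * p n fun i => b (j i) := by
    conv_lhs => rw [← b.sum_repr x]
    rw [ContinuousMultilinearMap.map_sum]
    simp [ContinuousMultilinearMap.map_smul_univ]
  rw [ncSubst_apply, map_sum, expand, sum_smul]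
  refine sum_congr rfl fun j _ => ?_
  rw [map_smul, map_monomial, smul_smul, mul_comm]

theorem eventually_map_ncSubst_sum [NormOneClass L] [CompleteSpace L] {f : E → 𝕜}
    {p : FormalMultilinearSeries 𝕜 E 𝕜} (hp : HasFPowerSeriesAt f p 0) :
    ∀ᶠ z : (ι → L) × E in 𝓝 0, ∀ φ : L →L[𝕜] W, (∀ i c, φ (z.1 i * c) = b.repr z.2 i • φ c) →
      φ ((ncSubst b L p).sum z.1) = f z.2 • φ 1 := by
  obtain ⟨r, hr⟩ := hp
  have hq := (ncSubst b L p).hasFPowerSeriesOnBall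
    (ncSubst_radius_pos b (hr.r_pos.trans_le hr.r_le))
  have ball_mem := prod_mem_nhds (Metric.eball_mem_nhds (0 : ι → L) hq.r_pos)
    (Metric.eball_mem_nhds (0 : E) hr.r_pos)
  filter_upwards [ball_mem] with z hz φ hφ
  have sum_map := (hq.hasSum hz.1).mapL φ
  have sum_smul := (hr.hasSum hz.2).smul_const (φ 1)
  simp only [zero_add, map_ncSubst_apply b hφ] at sum_map sum_smul
  exact sum_map.unique sum_smul

theorem analyticAt_ncSubst_sum [NormOneClass L] [CompleteSpace L] {f : E → 𝕜}
    {p : FormalMultilinearSeries 𝕜 E 𝕜} (hp : HasFPowerSeriesAt f p 0) :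
    AnalyticAt 𝕜 (ncSubst b L p).sum 0 :=
  ((ncSubst b L p).hasFPowerSeriesOnBall (ncSubst_radius_pos b hp.radius_pos)).analyticAt

end NoncommutativeSubstitution

section WeierstrassDivision

open scoped BoundedContinuousFunction

variable {𝕜 : Type*} [NontriviallyNormedField 𝕜]

theorem analyticAt_clm_apply {E F G : Type*} [NormedAddCommGroup E] [NormedSpace 𝕜 E]
    [NormedAddCommGroup F] [NormedSpace 𝕜 F] [NormedAddCommGroup G] [NormedSpace 𝕜 G]
    {A : E → F →L[𝕜] G} {y : E → F} {x : E} (hA : AnalyticAt 𝕜 A x) (hy : AnalyticAt 𝕜 y x) :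
    AnalyticAt 𝕜 (fun z => A z (y z)) x :=
  ((ContinuousLinearMap.id 𝕜 (F →L[𝕜] G)).analyticAt_bilinear (A x, y x)).comp₂ hA hy

/-- The Banach space of power series in one variable used for Weierstrass division. At the radius
`ρ`, the bounded sequence `y` stands for the series `∑ yₙ (X / ρ)ⁿ`. It is a type of its own so that
its module structure is found only through `NormedSpace`. -/
def BddSeries (𝕜 : Type*) [NontriviallyNormedField 𝕜] : Type _ := ℕ →ᵇ 𝕜

namespace BddSeries

instance : NormedAddCommGroup (BddSeries 𝕜) := inferInstanceAs (NormedAddCommGroup (ℕ →ᵇ 𝕜))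

instance : NormedSpace 𝕜 (BddSeries 𝕜) := inferInstanceAs (NormedSpace 𝕜 (ℕ →ᵇ 𝕜))

instance [CompleteSpace 𝕜] : CompleteSpace (BddSeries 𝕜) := inferInstanceAs (CompleteSpace (ℕ →ᵇ 𝕜))

/-- The constant series `1`. -/
def one : BddSeries 𝕜 :=
  BoundedContinuousFunction.ofNormedAddCommGroupDiscrete (Pi.single 0 1) 1 fun n => by
    rcases n with - | n <;> simp

/-- The `n`-th term of a sequence; at the radius `ρ` it is `ρⁿ` times the coefficient of `Xⁿ`. -/
def term (n : ℕ) : BddSeries 𝕜 →L[𝕜] 𝕜 := BoundedContinuousFunction.evalCLM 𝕜 n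

/-- Dropping the first term; at the radius `1` this is `y ↦ (y - y(0)) / X`. -/
def leftShift : BddSeries 𝕜 →L[𝕜] BddSeries 𝕜 :=
  BoundedContinuousFunction.compContinuousCLM 𝕜 𝕜 ⟨Nat.succ, continuous_of_discreteTopology⟩

theorem norm_casesOn_zero_le (y : ℕ →ᵇ 𝕜) (n : ℕ) : ‖(n.casesOn 0 y : 𝕜)‖ ≤ ‖y‖ := by
  rcases n with - | n
  exacts [norm_zero.trans_le (norm_nonneg y), y.norm_coe_le_norm n]

/-- Prepending a zero; at the radius `1` this is multiplication by `X`. -/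
def rightShift : BddSeries 𝕜 →L[𝕜] BddSeries 𝕜 :=
  LinearMap.mkContinuous (E := ℕ →ᵇ 𝕜) (F := ℕ →ᵇ 𝕜)
    { toFun y := BoundedContinuousFunction.ofNormedAddCommGroupDiscrete
        (fun n => n.casesOn 0 y) ‖y‖ (norm_casesOn_zero_le y)
      map_add' y z := by ext (- | n) <;> simp
      map_smul' c y := by ext (- | n); exacts [(mul_zero c).symm, rfl] }
    1 fun y => (BoundedContinuousFunction.norm_ofNormedAddCommGroup_le
      continuous_of_discreteTopology (norm_nonneg y) (norm_casesOn_zero_le y)).trans_eq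
        (one_mul _).symm

/-- The operator `y ↦ (y - y(0)) / X` on series of radius `ρ`. -/
def divX (ρ : 𝕜) : BddSeries 𝕜 →L[𝕜] BddSeries 𝕜 := ρ⁻¹ • leftShift

/-- Multiplication by `X` on series of radius `ρ`. -/
def mulX (ρ : 𝕜) : BddSeries 𝕜 →L[𝕜] BddSeries 𝕜 := ρ • rightShift

theorem ext_term {y z : BddSeries 𝕜} (h : ∀ n, term n y = term n z) : y = z :=
  BoundedContinuousFunction.ext h

theorem term_divX (ρ : 𝕜) (y : BddSeries 𝕜) (n : ℕ) : term n (divX ρ y) = ρ⁻¹ * term (n + 1) y :=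
  rfl

theorem term_zero_mulX (ρ : 𝕜) (y : BddSeries 𝕜) : term 0 (mulX ρ y) = 0 :=
  mul_zero ρ

theorem term_zero_one : term 0 (one : BddSeries 𝕜) = 1 := rfl

theorem divX_one (ρ : 𝕜) : divX ρ one = 0 :=
  ext_term fun _ => mul_zero ρ⁻¹

theorem divX_mulX {ρ : 𝕜} (hρ : ρ ≠ 0) (y : BddSeries 𝕜) : divX ρ (mulX ρ y) = y :=
  ext_term fun n => inv_mul_cancel_left₀ hρ (term n y)

theorem divX_pow_mul_mulX_pow {ρ : 𝕜} (hρ : ρ ≠ 0) (d : ℕ) : divX ρ ^ d * mulX ρ ^ d = 1 := by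
  have base : divX ρ * mulX ρ = 1 := ContinuousLinearMap.ext (divX_mulX hρ)
  exact pow_mul_pow_eq_one d base

theorem term_zero_divX_pow (ρ : 𝕜) (n : ℕ) (y : BddSeries 𝕜) :
    term 0 ((divX ρ ^ n) y) = ρ⁻¹ ^ n * term n y := by
  induction n generalizing y with
  | zero => simp
  | succ n ih =>
    rw [pow_succ, mul_apply_eq_comp, ih, term_divX, pow_succ, mul_assoc]

/-- The value at `t` of series of radius `ρ`. Since `term 0 ((divX ρ ^ n) y)` is the `n`-th
coefficient, it is the constant term of the resolvent of `divX ρ`; it is meaningful when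
`1 - t • divX ρ` is invertible. -/
def eval (ρ t : 𝕜) : BddSeries 𝕜 →L[𝕜] 𝕜 :=
  (term 0).comp (Ring.inverse (1 - t • divX ρ))

theorem eval_at_zero (ρ : 𝕜) (y : BddSeries 𝕜) : eval ρ 0 y = term 0 y := by
  simp [eval]

theorem eval_eq_term_zero_add {ρ t : 𝕜} (ht : IsUnit (1 - t • divX ρ)) (y : BddSeries 𝕜) :
    eval ρ t y = term 0 y + t * eval ρ t (divX ρ y) := by
  have resolvent := congrArg (term 0) (DFunLike.congr_fun (Ring.inverse_mul_cancel _ ht) y)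
  simp only [mul_apply_eq_comp, sub_apply,
    one_apply_eq_self, smul_apply, map_sub, map_smul] at resolvent
  exact sub_eq_iff_eq_add.1 resolvent

theorem eval_one {ρ t : 𝕜} (ht : IsUnit (1 - t • divX ρ)) : eval ρ t one = 1 := by
  rw [eval_eq_term_zero_add ht, divX_one, term_zero_one, map_zero, mul_zero, add_zero]

theorem eval_mulX {ρ t : 𝕜} (hρ : ρ ≠ 0) (ht : IsUnit (1 - t • divX ρ)) (y : BddSeries 𝕜) :
    eval ρ t (mulX ρ y) = t * eval ρ t y := by
  rw [eval_eq_term_zero_add ht, divX_mulX hρ, term_zero_mulX, zero_add]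

theorem eval_eq_pow_mul_add_sum {ρ t : 𝕜} (ht : IsUnit (1 - t • divX ρ)) (d : ℕ)
    (y : BddSeries 𝕜) :
    eval ρ t y =
      t ^ d * eval ρ t ((divX ρ ^ d) y) + ∑ i ∈ range d, term 0 ((divX ρ ^ i) y) * t ^ i := by
  induction d with
  | zero => simp
  | succ d ih =>
    rw [ih, eval_eq_term_zero_add ht ((divX ρ ^ d) y), sum_range_succ, pow_succ' (divX ρ),
      mul_apply_eq_comp]
    ring

/-- The quotient in the division by the series with multiplication operator `A`, for remainders of
degree less than `d`: it is chosen so that `divX ρ ^ d` kills the remainder. -/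
def quotientOperator (ρ : 𝕜) (d : ℕ) (A : BddSeries 𝕜 →L[𝕜] BddSeries 𝕜) :
    BddSeries 𝕜 →L[𝕜] BddSeries 𝕜 :=
  Ring.inverse (divX ρ ^ d * A) * divX ρ ^ d

theorem eval_eq_eval_quotientOperator_mul_add_sum {ρ t a : 𝕜} (ht : IsUnit (1 - t • divX ρ))
    {A : BddSeries 𝕜 →L[𝕜] BddSeries 𝕜} (hA : ∀ y, eval ρ t (A y) = a * eval ρ t y) {d : ℕ}
    (hdA : IsUnit (divX ρ ^ d * A)) (y : BddSeries 𝕜) :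
    eval ρ t y = eval ρ t (quotientOperator ρ d A y) * a +
      ∑ i : Fin d,
        term 0 ((divX ρ ^ (i : ℕ)) (y - A (quotientOperator ρ d A y))) * t ^ (i : ℕ) := by
  set r := y - A (quotientOperator ρ d A y)
  have divX_r : (divX ρ ^ d) r = 0 := by
    have cancel := DFunLike.congr_fun (Ring.mul_inverse_cancel _ hdA) ((divX ρ ^ d) y)
    rw [map_sub, sub_eq_zero]
    exact cancel.symm
  have eval_r : eval ρ t r = eval ρ t y - a * eval ρ t (quotientOperator ρ d A y) := by
    rw [map_sub, hA]
  have expand_r := eval_eq_pow_mul_add_sum ht d r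
  rw [divX_r, map_zero, mul_zero, zero_add, eval_r, ← Fin.sum_univ_eq_sum_range
    fun i => term 0 ((divX ρ ^ i) r) * t ^ i] at expand_r
  rw [← expand_r]
  ring

/-- `A` is multiplication by the germ at `0` of the function `h` on series of radius `ρ`. -/
def IsMulOperator (ρ : 𝕜) (h : 𝕜 → 𝕜) (A : BddSeries 𝕜 →L[𝕜] BddSeries 𝕜) : Prop :=
  ∀ᶠ t in 𝓝 (0 : 𝕜), ∀ y, eval ρ t (A y) = h t * eval ρ t y

theorem IsMulOperator.one (ρ : 𝕜) : IsMulOperator ρ (fun _ => 1) 1 := by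
  simp [IsMulOperator]

variable {ρ : 𝕜} {h k : 𝕜 → 𝕜} {A B : BddSeries 𝕜 →L[𝕜] BddSeries 𝕜}

theorem IsMulOperator.mul (hA : IsMulOperator ρ h A) (hB : IsMulOperator ρ k B) :
    IsMulOperator ρ (fun t => h t * k t) (A * B) := by
  filter_upwards [hA, hB] with t hAt hBt y
  rw [mul_apply_eq_comp, hAt, hBt, mul_assoc]

variable {V : Type*} [NormedAddCommGroup V] [NormedSpace 𝕜 V] [FiniteDimensional 𝕜 V]

/-- The operators on series of radius `ρ` substituted for the coordinates of `V × 𝕜`: those of `V`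
act through the scalars given by `v`, and the last one acts as multiplication by `X`. -/
def coordOperator (ρ : 𝕜) (v : V) :
    Fin (Module.finrank 𝕜 V) ⊕ Unit → BddSeries 𝕜 →L[𝕜] BddSeries 𝕜 :=
  Sum.elim (fun j => (Module.finBasis 𝕜 V).repr v j • 1) fun _ => mulX ρ

theorem eval_coordOperator {ρ t : 𝕜} (hρ : ρ ≠ 0) (ht : IsUnit (1 - t • divX ρ)) (v : V)
    (i : Fin (Module.finrank 𝕜 V) ⊕ Unit) (y : BddSeries 𝕜) :
    eval ρ t (coordOperator ρ v i y) =
      ((Module.finBasis 𝕜 V).prod (Module.Basis.singleton Unit 𝕜)).repr (v, t) i * eval ρ t y := by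
  rcases i with j | -
  · simp [coordOperator]
  · simp [coordOperator, eval_mulX hρ ht]

theorem tendsto_coordOperator_zero :
    Tendsto (fun ρ : 𝕜 => coordOperator ρ (0 : V)) (𝓝 0) (𝓝 0) := by
  refine tendsto_pi_nhds.2 (Sum.rec (fun j => ?_) fun _ => ?_)
  · simp [coordOperator]
  · exact Continuous.tendsto' (f := fun ρ : 𝕜 => ρ • rightShift) (by fun_prop) _ _ (zero_smul _ _)

instance : Nontrivial (BddSeries 𝕜) :=
  ⟨one, 0, fun h => one_ne_zero (term_zero_one.symm.trans (h ▸ map_zero (term 0)))⟩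

variable [CompleteSpace 𝕜]

theorem eventually_isUnit_one_sub_smul_divX (ρ : 𝕜) :
    ∀ᶠ t in 𝓝 (0 : 𝕜), IsUnit (1 - t • divX ρ) := by
  have h : Tendsto (fun t : 𝕜 => 1 - t • divX ρ) (𝓝 0) (𝓝 1) :=
    Continuous.tendsto' (by fun_prop) _ _ (by simp)
  exact h.eventually (Units.nhds 1)

theorem analyticAt_eval (ρ : 𝕜) : AnalyticAt 𝕜 (eval ρ) 0 := by
  have inverse_analytic : AnalyticAt 𝕜 (fun t : 𝕜 => Ring.inverse (1 - t • divX ρ)) 0 := by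
    refine AnalyticAt.comp_of_eq (analyticAt_inverse 1)
      (analyticAt_const.sub (analyticAt_id.smul analyticAt_const)) ?_
    simp
  exact ((ContinuousLinearMap.compL 𝕜 (BddSeries 𝕜) (BddSeries 𝕜) 𝕜 (term 0)).analyticAt _).comp
    inverse_analytic

theorem eventually_eval_divX_eq_zero {ρ : 𝕜} {y : BddSeries 𝕜}
    (hy : ∀ᶠ t in 𝓝 (0 : 𝕜), eval ρ t y = 0) : ∀ᶠ t in 𝓝 (0 : 𝕜), eval ρ t (divX ρ y) = 0 := by
  have eval_continuous : ContinuousAt (fun t => eval ρ t (divX ρ y)) 0 :=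
    (analyticAt_eval ρ).continuousAt.clm_apply continuousAt_const
  refine (eval_continuous.eventuallyEq_nhds_iff_eventuallyEq_nhdsNE continuousAt_const).1 ?_
  have hy0 : term 0 y = 0 := by simpa [eval_at_zero] using hy.self_of_nhds
  filter_upwards [hy.filter_mono nhdsWithin_le_nhds, self_mem_nhdsWithin,
    (eventually_isUnit_one_sub_smul_divX ρ).filter_mono nhdsWithin_le_nhds] with t hty ht0 ht
  rw [eval_eq_term_zero_add ht, hy0, zero_add] at hty
  exact (mul_eq_zero.1 hty).resolve_left ht0

theorem eq_zero_of_eventually_eval_eq_zero {ρ : 𝕜} (hρ : ρ ≠ 0) {y : BddSeries 𝕜}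
    (hy : ∀ᶠ t in 𝓝 (0 : 𝕜), eval ρ t y = 0) : y = 0 := by
  have eval_iterate (n : ℕ) : ∀ᶠ t in 𝓝 (0 : 𝕜), eval ρ t ((divX ρ ^ n) y) = 0 := by
    induction n with
    | zero => exact hy
    | succ n ih =>
      rw [pow_succ']
      exact eventually_eval_divX_eq_zero ih
  refine ext_term fun n => ?_
  rw [map_zero]
  have term_zero := (eval_iterate n).self_of_nhds
  rw [eval_at_zero, term_zero_divX_pow] at term_zero
  exact (mul_eq_zero.1 term_zero).resolve_left (pow_ne_zero n (inv_ne_zero hρ))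

theorem IsMulOperator.eq_of_eventuallyEq (hρ : ρ ≠ 0) (hA : IsMulOperator ρ h A)
    (hB : IsMulOperator ρ k B) (hhk : h =ᶠ[𝓝 0] k) : A = B := by
  ext1 y
  refine sub_eq_zero.1 (eq_zero_of_eventually_eval_eq_zero hρ ?_)
  filter_upwards [hA, hB, hhk] with t hAt hBt hht
  rw [map_sub, hAt, hBt, hht, sub_self]

theorem IsMulOperator.mulX_pow (hρ : ρ ≠ 0) (d : ℕ) :
    IsMulOperator ρ (fun t => t ^ d) (mulX ρ ^ d) := by
  filter_upwards [eventually_isUnit_one_sub_smul_divX ρ] with t ht y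
  induction d with
  | zero => simp
  | succ d ih => rw [pow_succ', mul_apply_eq_comp, eval_mulX hρ ht, ih, pow_succ', mul_assoc]

theorem analyticAt_coordOperator (ρ : 𝕜) :
    AnalyticAt 𝕜 (coordOperator ρ : V → Fin (Module.finrank 𝕜 V) ⊕ Unit → _) 0 := by
  refine AnalyticAt.pi (Sum.rec (fun j => ?_) fun _ => analyticAt_const)
  have coord_analytic :=
    ((Module.finBasis 𝕜 V).coord j).toContinuousLinearMap.analyticAt (0 : V)
  exact coord_analytic.smul analyticAt_const

theorem eventually_exists_mulOperator {f : V × 𝕜 → 𝕜} (hf : AnalyticAt 𝕜 f 0) :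
    ∀ᶠ ρ in 𝓝[≠] (0 : 𝕜), ∃ M : V → BddSeries 𝕜 →L[𝕜] BddSeries 𝕜, AnalyticAt 𝕜 M 0 ∧
      ∀ᶠ z in 𝓝 (0 : V × 𝕜), ∀ y, eval ρ z.2 (M z.1 y) = f z * eval ρ z.2 y := by
  obtain ⟨p, hp⟩ := hf
  let b := (Module.finBasis 𝕜 V).prod (Module.Basis.singleton Unit 𝕜)
  have sum_analytic := analyticAt_ncSubst_sum (L := BddSeries 𝕜 →L[𝕜] BddSeries 𝕜) b hp
  have map_sum := eventually_map_ncSubst_sum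
    (L := BddSeries 𝕜 →L[𝕜] BddSeries 𝕜) (W := 𝕜) b hp
  have center_tendsto : Tendsto (fun ρ : 𝕜 => (coordOperator ρ (0 : V), (0 : V × 𝕜))) (𝓝 0) (𝓝 0) :=
    tendsto_coordOperator_zero.prodMk_nhds tendsto_const_nhds
  filter_upwards [(tendsto_coordOperator_zero.eventually
      sum_analytic.eventually_analyticAt).filter_mono nhdsWithin_le_nhds,
    (center_tendsto.eventually map_sum.eventually_nhds).filter_mono nhdsWithin_le_nhds,
    self_mem_nhdsWithin] with ρ sum_analytic_ρ map_sum_ρ hρ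
  have coord_analytic := analyticAt_coordOperator (V := V) ρ
  refine ⟨fun v => (ncSubst b (BddSeries 𝕜 →L[𝕜] BddSeries 𝕜) p).sum (coordOperator ρ v),
    sum_analytic_ρ.comp coord_analytic, ?_⟩
  have point_tendsto : Tendsto (fun z : V × 𝕜 => (coordOperator ρ z.1, z)) (𝓝 0)
      (𝓝 (coordOperator ρ 0, 0)) :=
    (coord_analytic.continuousAt.tendsto.comp (continuous_fst.tendsto' 0 0 rfl)).prodMk_nhds
      tendsto_id
  filter_upwards [point_tendsto.eventually map_sum_ρ, continuous_snd.continuousAt.eventually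
    (eventually_isUnit_one_sub_smul_divX ρ)] with z map_sum_z hz y
  simpa using map_sum_z ((eval ρ z.2).comp (ContinuousLinearMap.apply 𝕜 (BddSeries 𝕜) y))
    fun i c => eval_coordOperator hρ hz z.1 i (c y)

theorem eventually_exists_isMulOperator {h : 𝕜 → 𝕜} (hh : AnalyticAt 𝕜 h 0) :
    ∀ᶠ ρ in 𝓝[≠] (0 : 𝕜), ∃ A, IsMulOperator ρ h A := by
  have comp_analytic : AnalyticAt 𝕜 (fun z : 𝕜 × 𝕜 => h z.2) 0 :=
    AnalyticAt.comp (x := (0 : 𝕜 × 𝕜)) hh analyticAt_snd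
  filter_upwards [eventually_exists_mulOperator comp_analytic] with ρ h_mul
  obtain ⟨M, -, hM⟩ := h_mul
  have axis_tendsto : Tendsto (fun t : 𝕜 => ((0 : 𝕜), t)) (𝓝 0) (𝓝 0) :=
    Continuous.tendsto' (by fun_prop) 0 0 rfl
  exact ⟨M 0, axis_tendsto.eventually hM⟩

theorem eventually_isUnit_divX_pow_mul {h u : 𝕜 → 𝕜} {d : ℕ} (hu : AnalyticAt 𝕜 u 0)
    (hu0 : u 0 ≠ 0) (hhu : ∀ᶠ t in 𝓝 0, h t = t ^ d * u t) :
    ∀ᶠ ρ in 𝓝[≠] (0 : 𝕜), ∀ A, IsMulOperator ρ h A → IsUnit (divX ρ ^ d * A) := by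
  filter_upwards [eventually_exists_isMulOperator hu, eventually_exists_isMulOperator (hu.inv hu0),
    self_mem_nhdsWithin] with ρ ⟨U, hU⟩ ⟨U', hU'⟩ hρ A hA
  have u_ne : ∀ᶠ t in 𝓝 0, u t ≠ 0 := hu.continuousAt.eventually_ne hu0
  have mul_inv : U * U' = 1 := (hU.mul hU').eq_of_eventuallyEq hρ (.one ρ)
    (u_ne.mono fun t ht => mul_inv_cancel₀ ht)
  have inv_mul : U' * U = 1 := (hU'.mul hU).eq_of_eventuallyEq hρ (.one ρ)
    (u_ne.mono fun t ht => inv_mul_cancel₀ ht)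
  have factor : A = mulX ρ ^ d * U :=
    hA.eq_of_eventuallyEq hρ ((IsMulOperator.mulX_pow hρ d).mul hU) hhu
  rw [factor, ← mul_assoc, divX_pow_mul_mulX_pow hρ, one_mul]
  exact ⟨⟨U, U', mul_inv, inv_mul⟩, rfl⟩

theorem analyticAt_quotientOperator {E : Type*} [NormedAddCommGroup E] [NormedSpace 𝕜 E] {ρ : 𝕜}
    {d : ℕ} {A : E → BddSeries 𝕜 →L[𝕜] BddSeries 𝕜} {v : E} (hA : AnalyticAt 𝕜 A v)
    (hdA : IsUnit (divX ρ ^ d * A v)) :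
    AnalyticAt 𝕜 (fun x => quotientOperator ρ d (A x)) v := by
  obtain ⟨u, hu⟩ := hdA
  exact (AnalyticAt.comp_of_eq (analyticAt_inverse u) (analyticAt_const.mul hA) hu.symm).mul
    analyticAt_const

end BddSeries

open BddSeries

theorem exists_weierstrass_division [CompleteSpace 𝕜] {V : Type*} [NormedAddCommGroup V]
    [NormedSpace 𝕜 V] [FiniteDimensional 𝕜 V] {f : V × 𝕜 → 𝕜} (hf : AnalyticAt 𝕜 f 0)
    (hf0 : ¬ ∀ᶠ t in 𝓝 (0 : 𝕜), f (0, t) = 0) :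
    ∃ d : ℕ, ∀ g : V × 𝕜 → 𝕜, AnalyticAt 𝕜 g 0 →
      ∃ q : V × 𝕜 → 𝕜, AnalyticAt 𝕜 q 0 ∧
        ∃ r : Fin d → V → 𝕜, (∀ i, AnalyticAt 𝕜 (r i) 0) ∧
          ∀ᶠ z in 𝓝 (0 : V × 𝕜), g z = q z * f z + ∑ i, r i z.1 * z.2 ^ (i : ℕ) := by
  have axis_analytic : AnalyticAt 𝕜 (fun t : 𝕜 => f (0, t)) 0 :=
    AnalyticAt.comp (x := (0 : 𝕜)) hf (analyticAt_const.prod analyticAt_id)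
  obtain ⟨d, u, hu, hu0, hfu⟩ := axis_analytic.exists_eventuallyEq_pow_smul_nonzero_iff.2 hf0
  simp only [sub_zero, smul_eq_mul] at hfu
  refine ⟨d, fun g hg => ?_⟩
  obtain ⟨ρ, ⟨F, hF, eval_F⟩, ⟨G, hG, eval_G⟩, isUnit_of⟩ :=
    ((eventually_exists_mulOperator hf).and ((eventually_exists_mulOperator hg).and
      (eventually_isUnit_divX_pow_mul hu hu0 hfu))).exists
  have axis_tendsto : Tendsto (fun t : 𝕜 => ((0 : V), t)) (𝓝 0) (𝓝 0) :=
    Continuous.tendsto' (by fun_prop) 0 0 rfl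
  have isUnit_zero : IsUnit (divX ρ ^ d * F 0) := isUnit_of (F 0) (axis_tendsto.eventually eval_F)
  have isUnit_near : ∀ᶠ v in 𝓝 0, IsUnit (divX ρ ^ d * F v) :=
    (continuousAt_const.mul hF.continuousAt).eventually (Units.isOpen.mem_nhds isUnit_zero)
  let Q : V → BddSeries 𝕜 := fun v => quotientOperator ρ d (F v) (G v one)
  have G_analytic : AnalyticAt 𝕜 (fun v => G v one) 0 := analyticAt_clm_apply hG analyticAt_const
  have Q_analytic : AnalyticAt 𝕜 Q 0 :=
    analyticAt_clm_apply (analyticAt_quotientOperator hF isUnit_zero) G_analytic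
  refine ⟨fun z => eval ρ z.2 (Q z.1), analyticAt_clm_apply
      (AnalyticAt.comp_of_eq (g := eval ρ) (analyticAt_eval ρ) analyticAt_snd rfl)
      (AnalyticAt.comp_of_eq (g := Q) Q_analytic analyticAt_fst rfl),
    fun i v => term 0 ((divX ρ ^ (i : ℕ)) (G v one - F v (Q v))), fun i =>
      analyticAt_clm_apply analyticAt_const (analyticAt_clm_apply analyticAt_const
        (G_analytic.sub (analyticAt_clm_apply hF Q_analytic))), ?_⟩
  filter_upwards [eval_F, eval_G, (continuous_fst.tendsto' 0 0 rfl).eventually isUnit_near,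
    (continuous_snd.tendsto' 0 0 rfl).eventually (eventually_isUnit_one_sub_smul_divX ρ)]
    with z eval_Fz eval_Gz isUnit_z hz
  rw [← eval_eq_eval_quotientOperator_mul_add_sum hz eval_Fz isUnit_z, eval_Gz, eval_one hz,
    mul_one]

end WeierstrassDivision

section DualNumbers

open Polynomial TrivSqZeroExt
open scoped DualNumber

variable {K R : Type*} [Field K] [CommRing R] (Φ : R →+* K[ε])

theorem fst_eval₂ (x : K[ε]) (Q : R[X]) :
    fst (Q.eval₂ Φ x) = Q.eval₂ ((fstHom K K K : K[ε] →+* K).comp Φ) (fst x) :=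
  hom_eval₂ Q Φ (fstHom K K K : K[ε] →+* K) x

theorem eval₂_inl_add_inr (t τ : K) (Q : R[X]) :
    Q.eval₂ Φ (inl t + inr τ) =
      Q.eval₂ Φ (inl t) + inr (τ * fst ((derivative Q).eval₂ Φ (inl t))) := by
  rw [eval₂_eq_eval_map, eval_add_of_sq_eq_zero _ _ _ (by simp [sq]), derivative_map]
  ext <;> simp [eval₂_eq_eval_map]

theorem exists_forall_eval₂_eq_zero_of_field [CharZero K] {F : Type*} [Field F] (Φ : F →+* K[ε])
    (t : K) : ∃ τ : K, ∀ Q : F[X], fst (Q.eval₂ Φ (inl t + inr τ)) = 0 →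
      Q.eval₂ Φ (inl t + inr τ) = 0 := by
  let _ : Algebra F K := ((fstHom K K K : K[ε] →+* K).comp Φ).toAlgebra
  have aeval_eq (Q : F[X]) (τ : K) : fst (Q.eval₂ Φ (inl t + inr τ)) = aeval t Q := by
    rw [fst_eval₂, fst_add, fst_inl, fst_inr, add_zero]
    rfl
  simp only [aeval_eq]
  by_cases ht : IsAlgebraic F t
  · have : CharZero F := (algebraMap F K).charZero
    set m := minpoly F t
    have derivative_ne : fst ((derivative m).eval₂ Φ (inl t)) ≠ 0 := by
      rw [fst_eval₂]
      exact (minpoly.irreducible ht.isIntegral).separable.aeval_derivative_ne_zero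
        (minpoly.aeval F t)
    set τ := -snd (m.eval₂ Φ (inl t)) / fst ((derivative m).eval₂ Φ (inl t))
    have eval_minpoly : m.eval₂ Φ (inl t + inr τ) = 0 := by
      ext
      · rw [aeval_eq, minpoly.aeval, fst_zero]
      · rw [eval₂_inl_add_inr, div_mul_cancel₀ _ derivative_ne]
        simp
    refine ⟨τ, fun Q hQ => ?_⟩
    obtain ⟨q, rfl⟩ := minpoly.dvd F t hQ
    rw [eval₂_mul, eval_minpoly, zero_mul]
  · refine ⟨0, fun Q hQ => ?_⟩
    rw [transcendental_iff.1 ht Q hQ, eval₂_zero]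

-- `Φ` kills the prime ideal `ker (fst ∘ Φ)`, hence extends to the residue field of `R` there, over
-- which `t` is either transcendental or separable algebraic.
theorem exists_forall_eval₂_eq_zero [CharZero K] (hΦ : ∀ r, fst (Φ r) = 0 → Φ r = 0) (t : K) :
    ∃ τ : K, ∀ Q : R[X], fst (Q.eval₂ Φ (inl t + inr τ)) = 0 →
      Q.eval₂ Φ (inl t + inr τ) = 0 := by
  set I : Ideal R := RingHom.ker ((fstHom K K K : K[ε] →+* K).comp Φ)
  have : I.IsPrime := RingHom.ker_isPrime _
  let Φ₁ : R ⧸ I →+* K[ε] := Ideal.Quotient.lift I Φ hΦ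
  have isUnit_Φ₁ : ∀ r : nonZeroDivisors (R ⧸ I), IsUnit (Φ₁ r) := by
    rintro ⟨r, hr⟩
    obtain ⟨r, rfl⟩ := Ideal.Quotient.mk_surjective r
    rw [isUnit_iff_isUnit_fst, isUnit_iff_ne_zero]
    exact fun h => nonZeroDivisors.ne_zero hr (Ideal.Quotient.eq_zero_iff_mem.2 h)
  let Φ₂ : FractionRing (R ⧸ I) →+* K[ε] := IsLocalization.lift isUnit_Φ₁
  have Φ_eq : Φ = Φ₂.comp ((algebraMap (R ⧸ I) _).comp (Ideal.Quotient.mk I)) := by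
    ext1 r
    rw [RingHom.comp_apply, RingHom.comp_apply, IsLocalization.lift_eq]
    rfl
  obtain ⟨τ, hτ⟩ := exists_forall_eval₂_eq_zero_of_field Φ₂ t
  refine ⟨τ, fun Q => ?_⟩
  rw [Φ_eq, ← eval₂_map]
  exact hτ _

end DualNumbers

section Tangents

open Polynomial TrivSqZeroExt
open scoped DualNumber

variable {𝕜 V T : Type*} [NontriviallyNormedField 𝕜] [NormedAddCommGroup V] [NormedSpace 𝕜 V]

/-- The ring of functions analytic at the origin. -/
def analyticSubring (𝕜 V : Type*) [NontriviallyNormedField 𝕜] [NormedAddCommGroup V]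
    [NormedSpace 𝕜 V] : Subring (V → 𝕜) where
  carrier := {f | AnalyticAt 𝕜 f 0}
  mul_mem' hf hg := hf.mul hg
  one_mem' := analyticAt_const
  add_mem' hf hg := hf.add hg
  zero_mem' := analyticAt_const
  neg_mem' hf := hf.neg

theorem eventually_differentiableAt_of_tendsto {E : Type*} [NormedAddCommGroup E] [NormedSpace 𝕜 E]
    [CompleteSpace E] {f : V → E} {v : V} (hf : AnalyticAt 𝕜 f v) {l : Filter T} {x : T → V}
    (hx : Tendsto x l (𝓝 v)) : ∀ᶠ s in l, DifferentiableAt 𝕜 f (x s) :=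
  hx.eventually (hf.eventually_analyticAt.mono fun _ h => h.differentiableAt)

variable {U : Ultrafilter T} {x : T → V}

/-- Evaluation of analytic functions at the point `x + ε ξ` of `V` with coordinates in the dual
numbers over the ultrapower of `𝕜`: the real part of `f (x + ε ξ)` is the germ of `f ∘ x`, the
infinitesimal part that of the derivative of `f` along `ξ`. -/
def tangentHom [CompleteSpace 𝕜] (hx : Tendsto x U (𝓝 0)) (ξ : T → V) :
    analyticSubring 𝕜 V →+* (Germ (U : Filter T) 𝕜)[ε] where
  toFun f := (((fun s => f.1 (x s) : T → 𝕜) : Germ (U : Filter T) 𝕜),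
    ((fun s => fderiv 𝕜 f.1 (x s) (ξ s) : T → 𝕜) : Germ (U : Filter T) 𝕜))
  map_one' := by
    refine Prod.ext rfl (Germ.coe_eq.2 (Eventually.of_forall fun s => ?_))
    simp
  map_zero' := by
    refine Prod.ext rfl (Germ.coe_eq.2 (Eventually.of_forall fun s => ?_))
    simp
  map_add' f g := by
    refine Prod.ext rfl (Germ.coe_eq.2 ?_)
    filter_upwards [eventually_differentiableAt_of_tendsto f.2 hx,
      eventually_differentiableAt_of_tendsto g.2 hx] with s hf hg
    simp [fderiv_add hf hg]
  map_mul' f g := by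
    refine Prod.ext rfl (Germ.coe_eq.2 ?_)
    filter_upwards [eventually_differentiableAt_of_tendsto f.2 hx,
      eventually_differentiableAt_of_tendsto g.2 hx] with s hf hg
    simp [fderiv_mul hf hg, mul_comm]

theorem tangentHom_apply [CompleteSpace 𝕜] (hx : Tendsto x U (𝓝 0)) (ξ : T → V)
    (f : analyticSubring 𝕜 V) :
    tangentHom hx ξ f = inl ((fun s => f.1 (x s) : T → 𝕜) : Germ (U : Filter T) 𝕜) +
      inr ((fun s => fderiv 𝕜 f.1 (x s) (ξ s) : T → 𝕜) : Germ (U : Filter T) 𝕜) :=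
  (inl_fst_add_inr_snd_eq _).symm

theorem fst_tangentHom_eq_zero_iff [CompleteSpace 𝕜] (hx : Tendsto x U (𝓝 0)) (ξ : T → V)
    (f : analyticSubring 𝕜 V) : fst (tangentHom hx ξ f) = 0 ↔ ∀ᶠ s in U, f.1 (x s) = 0 :=
  Germ.coe_eq

theorem snd_tangentHom_eq_zero_iff [CompleteSpace 𝕜] (hx : Tendsto x U (𝓝 0)) (ξ : T → V)
    (f : analyticSubring 𝕜 V) :
    snd (tangentHom hx ξ f) = 0 ↔ ∀ᶠ s in U, fderiv 𝕜 f.1 (x s) (ξ s) = 0 :=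
  Germ.coe_eq

theorem tangentHom_congr [CompleteSpace 𝕜] (hx : Tendsto x U (𝓝 0)) (ξ : T → V)
    {f g : analyticSubring 𝕜 V} (h : f.1 =ᶠ[𝓝 0] g.1) : tangentHom hx ξ f = tangentHom hx ξ g :=
  Prod.ext (Germ.coe_eq.2 (hx.eventually h)) (Germ.coe_eq.2
    ((hx.eventually h.eventuallyEq_nhds).mono fun s hs => by simp only [hs.fderiv_eq]))

/-- The vector field `ξ` along `x` is tangent to the analytic germ of the points `x s`: it is
annihilated by the differential of each analytic function that vanishes at `x s` for `U`-almost
every `s`. -/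
def IsTangentField (𝕜 : Type*) [NontriviallyNormedField 𝕜] [NormedSpace 𝕜 V] (U : Ultrafilter T)
    (x ξ : T → V) : Prop :=
  ∀ f : V → 𝕜, AnalyticAt 𝕜 f 0 → (∀ᶠ s in U, f (x s) = 0) →
    ∀ᶠ s in U, fderiv 𝕜 f (x s) (ξ s) = 0

theorem isTangentField_iff [CompleteSpace 𝕜] (hx : Tendsto x U (𝓝 0)) {ξ : T → V} :
    IsTangentField 𝕜 U x ξ ↔ ∀ f : analyticSubring 𝕜 V,
      fst (tangentHom hx ξ f) = 0 → tangentHom hx ξ f = 0 := by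
  simp only [TrivSqZeroExt.ext_iff, fst_zero, snd_zero, fst_tangentHom_eq_zero_iff,
    snd_tangentHom_eq_zero_iff, Subtype.forall]
  exact ⟨fun h f hf hfx => ⟨hfx, h f hf hfx⟩, fun h f hf hfx => (h f hf hfx).2⟩

/-- The projection `V × 𝕜 → 𝕜` as an analytic function. -/
def analyticSnd (𝕜 V : Type*) [NontriviallyNormedField 𝕜] [NormedAddCommGroup V]
    [NormedSpace 𝕜 V] : analyticSubring 𝕜 (V × 𝕜) :=
  ⟨Prod.snd, analyticAt_snd⟩

/-- Pullback of analytic functions along the projection `V × 𝕜 → V`. -/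
def compFst (𝕜 V : Type*) [NontriviallyNormedField 𝕜] [NormedAddCommGroup V]
    [NormedSpace 𝕜 V] : analyticSubring 𝕜 V →+* analyticSubring 𝕜 (V × 𝕜) where
  toFun f := ⟨fun z => f.1 z.1, AnalyticAt.comp_of_eq f.2 analyticAt_fst rfl⟩
  map_one' := rfl
  map_zero' := rfl
  map_add' _ _ := rfl
  map_mul' _ _ := rfl

/-- A polynomial in the last variable with analytic coefficients, as an analytic function. -/
def evalSnd (𝕜 V : Type*) [NontriviallyNormedField 𝕜] [NormedAddCommGroup V]
    [NormedSpace 𝕜 V] : (analyticSubring 𝕜 V)[X] →+* analyticSubring 𝕜 (V × 𝕜) :=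
  eval₂RingHom (compFst 𝕜 V) (analyticSnd 𝕜 V)

theorem evalSnd_apply (Q : (analyticSubring 𝕜 V)[X]) (z : V × 𝕜) :
    (evalSnd 𝕜 V Q).1 z =
      Q.eval₂ ((Pi.evalRingHom (fun _ : V => 𝕜) z.1).comp (analyticSubring 𝕜 V).subtype) z.2 :=
  hom_eval₂ Q (compFst 𝕜 V)
    ((Pi.evalRingHom (fun _ : V × 𝕜 => 𝕜) z).comp (analyticSubring 𝕜 (V × 𝕜)).subtype) _

theorem not_eventually_evalSnd_eq_zero {Q : (analyticSubring 𝕜 V)[X]} (hQ : Q.Monic) :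
    ¬ ∀ᶠ t in 𝓝 (0 : 𝕜), (evalSnd 𝕜 V Q).1 (0, t) = 0 := by
  simp only [evalSnd_apply, eval₂_eq_eval_map]
  exact fun h => (hQ.map _).ne_zero (eq_zero_of_infinite_isRoot _ (infinite_of_mem_nhds 0 h))

theorem exists_weierstrass_division_evalSnd [CompleteSpace 𝕜] [FiniteDimensional 𝕜 V]
    {f : analyticSubring 𝕜 (V × 𝕜)} (hf0 : ¬ ∀ᶠ t in 𝓝 (0 : 𝕜), f.1 (0, t) = 0) :
    ∃ d : ℕ, ∀ g : analyticSubring 𝕜 (V × 𝕜), ∃ q, ∃ r : (analyticSubring 𝕜 V)[X],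
      r.degree < d ∧ g.1 =ᶠ[𝓝 0] (q * f + evalSnd 𝕜 V r).1 := by
  obtain ⟨d, hd⟩ := exists_weierstrass_division f.2 hf0
  refine ⟨d, fun g => ?_⟩
  obtain ⟨q, hq, r, hr, division⟩ := hd g.1 g.2
  let c (i : Fin d) : analyticSubring 𝕜 V := ⟨r i, hr i⟩
  refine ⟨⟨q, hq⟩, ∑ i, C (c i) * X ^ (i : ℕ), degree_sum_fin_lt c, ?_⟩
  filter_upwards [division] with z hz
  change g.1 z = q z * f.1 z + (evalSnd 𝕜 V _).1 z
  rw [hz, evalSnd_apply]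
  simp [eval₂_finsetSum, c]

theorem exists_monic_evalSnd_eventuallyEq_mul [CompleteSpace 𝕜] [FiniteDimensional 𝕜 V]
    {f : analyticSubring 𝕜 (V × 𝕜)} (hf0 : ¬ ∀ᶠ t in 𝓝 (0 : 𝕜), f.1 (0, t) = 0) :
    ∃ W : (analyticSubring 𝕜 V)[X], W.Monic ∧ ∃ q : analyticSubring 𝕜 (V × 𝕜),
      (evalSnd 𝕜 V W).1 =ᶠ[𝓝 0] (q * f).1 := by
  obtain ⟨d, hd⟩ := exists_weierstrass_division_evalSnd hf0
  obtain ⟨q, r, hr, division⟩ := hd (evalSnd 𝕜 V (X ^ d))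
  refine ⟨X ^ d - r, monic_X_pow_sub hr, q, ?_⟩
  filter_upwards [division] with z hz
  rw [map_sub]
  exact sub_eq_of_eq_add hz

theorem tangentHom_compFst [CompleteSpace 𝕜] {x : T → V × 𝕜} (hx : Tendsto x U (𝓝 0))
    (hx1 : Tendsto (fun s => (x s).1) U (𝓝 0)) (ξ : T → V × 𝕜) (f : analyticSubring 𝕜 V) :
    tangentHom hx ξ (compFst 𝕜 V f) = tangentHom hx1 (fun s => (ξ s).1) f := by
  refine Prod.ext rfl (Germ.coe_eq.2 ?_)
  filter_upwards [eventually_differentiableAt_of_tendsto f.2 hx1] with s hs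
  exact congrArg (· (ξ s)) (hs.hasFDerivAt.comp (x s) hasFDerivAt_fst).fderiv

theorem tangentHom_analyticSnd [CompleteSpace 𝕜] {x : T → V × 𝕜} (hx : Tendsto x U (𝓝 0))
    (ξ : T → V × 𝕜) :
    tangentHom hx ξ (analyticSnd 𝕜 V) = inl ((fun s => (x s).2 : T → 𝕜) : Germ (U : Filter T) 𝕜) +
      inr ((fun s => (ξ s).2 : T → 𝕜) : Germ (U : Filter T) 𝕜) := by
  rw [tangentHom_apply]
  simp only [analyticSnd, fderiv_snd, ContinuousLinearMap.coe_snd']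

theorem tangentHom_evalSnd [CompleteSpace 𝕜] {x : T → V × 𝕜} (hx : Tendsto x U (𝓝 0))
    (hx1 : Tendsto (fun s => (x s).1) U (𝓝 0)) (ξ : T → V × 𝕜) (Q : (analyticSubring 𝕜 V)[X]) :
    tangentHom hx ξ (evalSnd 𝕜 V Q) = Q.eval₂ (tangentHom hx1 fun s => (ξ s).1)
      (inl ((fun s => (x s).2 : T → 𝕜) : Germ (U : Filter T) 𝕜) +
        inr ((fun s => (ξ s).2 : T → 𝕜) : Germ (U : Filter T) 𝕜)) := by
  refine (hom_eval₂ Q (compFst 𝕜 V) (tangentHom hx ξ) (analyticSnd 𝕜 V)).trans ?_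
  rw [tangentHom_analyticSnd]
  congr 1
  exact RingHom.ext (tangentHom_compFst hx hx1 ξ)

theorem IsTangentField.exists_prod [CompleteSpace 𝕜] [CharZero 𝕜] [FiniteDimensional 𝕜 V]
    {x : T → V × 𝕜} (hx : Tendsto x U (𝓝 0)) {ξ : T → V}
    (hξ : IsTangentField 𝕜 U (fun s => (x s).1) ξ) {f : V × 𝕜 → 𝕜} (hf : AnalyticAt 𝕜 f 0)
    (hfx : ∀ᶠ s in U, f (x s) = 0) (hf0 : ¬ ∀ᶠ t in 𝓝 (0 : 𝕜), f (0, t) = 0) :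
    ∃ τ : T → 𝕜, IsTangentField 𝕜 U x fun s => (ξ s, τ s) := by
  have hx1 : Tendsto (fun s => (x s).1) U (𝓝 0) := (_root_.continuous_fst.tendsto' 0 0 rfl).comp hx
  have : CharZero (Germ (U : Filter T) 𝕜) := charZero_of_injective_ringHom
    (f := (Germ.coeRingHom (U : Filter T)).comp (Pi.constRingHom T 𝕜))
    fun a b h => Germ.const_inj.1 h
  obtain ⟨τ, hτ⟩ := exists_forall_eval₂_eq_zero (tangentHom hx1 ξ) ((isTangentField_iff hx1).1 hξ)
    ((fun s => (x s).2 : T → 𝕜) : Germ (U : Filter T) 𝕜)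
  obtain ⟨τ, rfl⟩ := Quotient.exists_rep τ
  refine ⟨τ, (isTangentField_iff hx).2 ?_⟩
  set Ψ := tangentHom (𝕜 := 𝕜) hx fun s => (ξ s, τ s)
  have Ψ_evalSnd (Q : (analyticSubring 𝕜 V)[X]) (hQ : fst (Ψ (evalSnd 𝕜 V Q)) = 0) :
      Ψ (evalSnd 𝕜 V Q) = 0 := by
    rw [tangentHom_evalSnd hx hx1] at hQ ⊢
    exact hτ Q hQ
  obtain ⟨W, monic_W, q, W_eq⟩ := exists_monic_evalSnd_eventuallyEq_mul (f := ⟨f, hf⟩) hf0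
  have Ψ_W : Ψ (evalSnd 𝕜 V W) = 0 := by
    refine Ψ_evalSnd W ?_
    rw [tangentHom_congr hx _ W_eq, map_mul, fst_mul,
      (fst_tangentHom_eq_zero_iff hx _ ⟨f, hf⟩).2 hfx, mul_zero]
  obtain ⟨_, division⟩ :=
    exists_weierstrass_division_evalSnd (not_eventually_evalSnd_eq_zero monic_W)
  intro g hg
  obtain ⟨q, r, -, g_eq⟩ := division g
  have Ψ_g : Ψ g = Ψ (evalSnd 𝕜 V r) := by
    rw [tangentHom_congr hx _ g_eq, map_add, map_mul, Ψ_W, mul_zero, zero_add]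
  rw [Ψ_g] at hg ⊢
  exact Ψ_evalSnd r hg

theorem IsTangentField.of_comp_equiv {W : Type*} [NormedAddCommGroup W] [NormedSpace 𝕜 W]
    (e : V ≃L[𝕜] W) {η : T → W} (hη : IsTangentField 𝕜 U (e ∘ x) η) :
    IsTangentField 𝕜 U x (e.symm ∘ η) := by
  intro f hf hfx
  have hfe := hη (f ∘ e.symm)
    (AnalyticAt.comp_of_eq hf (e.symm.analyticAt 0) (map_zero _))
    (by simpa using hfx)
  simpa [e.symm.comp_right_fderiv] using hfe

theorem isTangentField_of_forall_eventually_eq_zero (hx : Tendsto x U (𝓝 0))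
    (h : ∀ f : V → 𝕜, AnalyticAt 𝕜 f 0 → (∀ᶠ s in U, f (x s) = 0) → ∀ᶠ v in 𝓝 0, f v = 0)
    (ξ : T → V) : IsTangentField 𝕜 U x ξ := by
  intro f hf hfx
  filter_upwards [hx.eventually (h f hf hfx).eventually_nhds] with s hs
  rw [EventuallyEq.fderiv_eq (f := fun _ => 0) hs, fderiv_const_apply, zero_apply]

theorem eventually_eq_zero_of_forall_line {E : Type*} [NormedAddCommGroup E] [NormedSpace 𝕜 E]
    {f : V → E} (hf : AnalyticAt 𝕜 f 0) (h : ∀ v, ∀ᶠ t in 𝓝 (0 : 𝕜), f (t • v) = 0) :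
    ∀ᶠ v in 𝓝 0, f v = 0 := by
  obtain ⟨p, hp⟩ := hf
  have apply_eq_zero (n : ℕ) (v : V) : p n (fun _ => v) = 0 := by
    let u := ContinuousLinearMap.toSpanSingleton 𝕜 v
    have hpu : HasFPowerSeriesAt (f ∘ u) (p.compContinuousLinearMap u) 0 :=
      HasFPowerSeriesAt.compContinuousLinearMap (by rwa [map_zero])
    have hpu0 : HasFPowerSeriesAt 0 (p.compContinuousLinearMap u) 0 := hpu.congr (h v)
    have := hpu0.apply_eq_zero n 1
    rwa [FormalMultilinearSeries.compContinuousLinearMap_apply, Function.comp_def,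
      ContinuousLinearMap.toSpanSingleton_apply_one] at this
  filter_upwards [hp.eventually_hasSum] with v hv
  simp only [apply_eq_zero, zero_add] at hv
  exact hv.unique hasSum_zero

theorem exists_continuousLinearEquiv_prod_line [CompleteSpace 𝕜] [FiniteDimensional 𝕜 V] {v : V}
    (hv : v ≠ 0) :
    ∃ (H : Submodule 𝕜 V) (e : V ≃L[𝕜] H × 𝕜), ∀ t : 𝕜, e.symm (0, t) = t • v := by
  obtain ⟨φ, hφ⟩ := Module.Projective.exists_dual_eq_one 𝕜 hv
  let ψ : V →L[𝕜] 𝕜 := φ.toContinuousLinearMap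
  have rightInverse : Function.RightInverse (ContinuousLinearMap.toSpanSingleton 𝕜 v) ψ := by
    intro t
    simp [ψ, hφ]
  let e := ContinuousLinearEquiv.equivOfRightInverse ψ _ rightInverse
  refine ⟨ψ.ker, e.trans (ContinuousLinearEquiv.prodComm 𝕜 𝕜 ψ.ker), fun t => ?_⟩
  simp [e]

theorem eventually_fst_ne_zero {l : Filter T} {x : T → V × 𝕜} (hx : Tendsto x l (𝓝 0))
    (hx0 : ∀ᶠ s in l, x s ≠ 0) {f : V × 𝕜 → 𝕜} (hf : AnalyticAt 𝕜 f 0)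
    (hfx : ∀ᶠ s in l, f (x s) = 0) (hf0 : ¬ ∀ᶠ t in 𝓝 (0 : 𝕜), f (0, t) = 0) :
    ∀ᶠ s in l, (x s).1 ≠ 0 := by
  have axis_analytic : AnalyticAt 𝕜 (fun t : 𝕜 => f (0, t)) 0 :=
    AnalyticAt.comp (x := (0 : 𝕜)) hf (analyticAt_const.prod analyticAt_id)
  have axis_ne := eventually_nhdsWithin_iff.1
    (axis_analytic.eventually_eq_zero_or_eventually_ne_zero.resolve_left hf0)
  have hx2 : Tendsto (fun s => (x s).2) l (𝓝 0) := (_root_.continuous_snd.tendsto' 0 0 rfl).comp hx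
  filter_upwards [hx0, hfx, hx2.eventually axis_ne] with s hs hfs axis_ne_s hs1
  refine axis_ne_s (fun hs2 => hs (Prod.ext hs1 hs2)) ?_
  rwa [← hs1]

theorem exists_isTangentField [CompleteSpace 𝕜] [CharZero 𝕜] [FiniteDimensional 𝕜 V]
    (hx : Tendsto x U (𝓝 0)) (hx0 : ∀ᶠ s in U, x s ≠ 0) :
    ∃ ξ : T → V, IsTangentField 𝕜 U x ξ ∧ ∀ᶠ s in U, ξ s ≠ 0 := by
  induction hn : Module.finrank 𝕜 V using Nat.strong_induction_on generalizing V with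
  | _ n ih =>
  by_cases h : ∀ f : V → 𝕜, AnalyticAt 𝕜 f 0 → (∀ᶠ s in U, f (x s) = 0) → ∀ᶠ v in 𝓝 0, f v = 0
  · exact ⟨x, isTangentField_of_forall_eventually_eq_zero hx h x, hx0⟩
  push Not at h
  obtain ⟨f, hf, hfx, hf0⟩ := h
  obtain ⟨v, hv⟩ : ∃ v, ¬ ∀ᶠ t in 𝓝 (0 : 𝕜), f (t • v) = 0 := by
    contrapose! hf0
    exact eventually_eq_zero_of_forall_line hf hf0
  have f_zero : f 0 = 0 := tendsto_nhds_unique_of_eventuallyEq (hf.continuousAt.tendsto.comp hx)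
    tendsto_const_nhds hfx
  have v_ne : v ≠ 0 := by
    rintro rfl
    simp [f_zero] at hv
  obtain ⟨H, e, he⟩ := exists_continuousLinearEquiv_prod_line (𝕜 := 𝕜) v_ne
  have finrank_lt : Module.finrank 𝕜 H < n := by
    have := e.toLinearEquiv.finrank_eq
    rw [Module.finrank_prod, Module.finrank_self] at this
    omega
  have hex : Tendsto (e ∘ x) U (𝓝 0) := (e.continuous.tendsto' 0 0 (map_zero e)).comp hx
  have hfe : AnalyticAt 𝕜 (f ∘ e.symm) 0 :=
    AnalyticAt.comp_of_eq hf (e.symm.analyticAt 0) (map_zero _)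
  have hfex : ∀ᶠ s in U, (f ∘ e.symm) ((e ∘ x) s) = 0 := by simpa using hfx
  have hfe0 : ¬ ∀ᶠ t in 𝓝 (0 : 𝕜), (f ∘ e.symm) (0, t) = 0 := by
    simpa only [Function.comp_apply, he] using hv
  obtain ⟨ξ, hξ, ξ_ne⟩ := ih _ finrank_lt ((_root_.continuous_fst.tendsto' 0 0 rfl).comp hex)
    (eventually_fst_ne_zero hex (by simpa using hx0) hfe hfex hfe0) rfl
  obtain ⟨τ, hτ⟩ := hξ.exists_prod hex hfe hfex hfe0
  refine ⟨_, hτ.of_comp_equiv e, ?_⟩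
  filter_upwards [ξ_ne] with s hs
  simp [hs]

theorem IsTangentField.eventually_fderiv_eq_zero [CompleteSpace 𝕜] {E : Type*}
    [NormedAddCommGroup E] [NormedSpace 𝕜 E] [FiniteDimensional 𝕜 E] {ξ : T → V}
    (hξ : IsTangentField 𝕜 U x ξ) (hx : Tendsto x U (𝓝 0)) {F : V → E} (hF : AnalyticAt 𝕜 F 0)
    (hFx : ∀ᶠ s in U, F (x s) = 0) : ∀ᶠ s in U, fderiv 𝕜 F (x s) (ξ s) = 0 := by
  have : CompleteSpace E := FiniteDimensional.complete 𝕜 E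
  let b := Module.finBasis 𝕜 E
  let coord (i) : E →L[𝕜] 𝕜 := (b.coord i).toContinuousLinearMap
  have coord_fderiv : ∀ᶠ s in U, ∀ i, fderiv 𝕜 (coord i ∘ F) (x s) (ξ s) = 0 :=
    eventually_all.2 fun i => hξ _ (((coord i).analyticAt _).comp hF)
      (hFx.mono fun s hs => by rw [Function.comp_apply, hs, map_zero])
  filter_upwards [coord_fderiv, eventually_differentiableAt_of_tendsto hF hx] with s hs hFs
  simp only [((coord _).hasFDerivAt.comp (x s) hFs.hasFDerivAt).fderiv] at hs
  exact b.ext_elem fun i => by simpa [coord] using hs i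

theorem not_accPt_zeros_of_injective_fderiv [CompleteSpace 𝕜] [CharZero 𝕜] [FiniteDimensional 𝕜 V]
    {E : Type*} [NormedAddCommGroup E] [NormedSpace 𝕜 E] [FiniteDimensional 𝕜 E]
    {F : V → E} {w : V} (hF : AnalyticAt 𝕜 F w) :
    ¬ AccPt w (𝓟 {v | F v = 0 ∧ Function.Injective (fderiv 𝕜 F v)}) := by
  intro (_ : NeBot _)
  let U := Ultrafilter.of (𝓝[≠] w ⊓ 𝓟 {v | F v = 0 ∧ Function.Injective (fderiv 𝕜 F v)})
  have le_nhdsNE : (U : Filter V) ≤ 𝓝[≠] w := (Ultrafilter.of_le _).trans inf_le_left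
  have zeros : ∀ᶠ v in U, F v = 0 ∧ Function.Injective (fderiv 𝕜 F v) :=
    (Ultrafilter.of_le _).trans inf_le_right (mem_principal_self _)
  have hx : Tendsto (fun v => v - w) U (𝓝 0) :=
    tendsto_sub_nhds_zero_iff.2 (tendsto_id'.2 (le_nhdsNE.trans nhdsWithin_le_nhds))
  have hx0 : ∀ᶠ v in U, v - w ≠ 0 :=
    Eventually.mono (le_nhdsNE self_mem_nhdsWithin) fun _ => sub_ne_zero.2
  obtain ⟨ξ, hξ, ξ_ne⟩ := exists_isTangentField (𝕜 := 𝕜) hx hx0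
  have translate_analytic : AnalyticAt 𝕜 (fun y => F (w + y)) 0 :=
    AnalyticAt.comp_of_eq hF (analyticAt_const.add analyticAt_id) (add_zero w)
  have tangent := hξ.eventually_fderiv_eq_zero hx translate_analytic
    (zeros.mono fun v hv => by rw [add_sub_cancel, hv.1])
  obtain ⟨v, ⟨-, injective⟩, ξv_ne, hv⟩ := (zeros.and (ξ_ne.and tangent)).exists
  rw [fderiv_comp_add_left, add_sub_cancel] at hv
  exact ξv_ne (injective (hv.trans (map_zero _).symm))

end Tangents

section LinearStability

variable {ι : Type*} [Fintype ι] [DecidableEq ι] {M : Matrix ι ι ℝ}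

theorem LinStable.neg_of_mem_spectrum (h : LinStable M) {r : ℝ} (hr : r ∈ spectrum ℝ M) : r < 0 :=
  h (algebraMap ℝ ℂ r) (Matrix.mem_spectrum_iff_isRoot_charpoly.1 hr).map

theorem LinStable.isUnit (h : LinStable M) : IsUnit M :=
  spectrum.zero_notMem_iff ℝ |>.1 fun h0 => (h.neg_of_mem_spectrum h0).false

theorem diag_neg_of_isHermitian_of_spectrum_neg (hM : M.IsHermitian)
    (h : ∀ r ∈ spectrum ℝ M, r < 0) (i : ι) : M i i < 0 := by
  have posDef_neg : (-M).PosDef := by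
    rw [hM.neg.posDef_iff_eigenvalues_pos]
    intro k
    have mem_spectrum : hM.neg.eigenvalues k ∈ spectrum ℝ (-M) :=
      hM.neg.spectrum_real_eq_range_eigenvalues ▸ Set.mem_range_self k
    rw [← spectrum.neg_eq, Set.mem_neg] at mem_spectrum
    exact neg_lt_zero.1 (h _ mem_spectrum)
  exact neg_pos.1 posDef_neg.diag_pos

theorem LinStable.diag_neg (h : LinStable M) {w : ι → ℝ} (hw : ∀ i, 0 < w i)
    (hM : ∀ i j, M i j * w j = M j i * w i) (i : ι) : M i i < 0 := by
  have sqrt_ne (i : ι) : √(w i) ≠ 0 := (Real.sqrt_pos.2 (hw i)).ne'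
  have diagonal_mul_diagonal_eq_one {a b : ι → ℝ} (hab : ∀ i, a i * b i = 1) :
      Matrix.diagonal a * Matrix.diagonal b = 1 := by
    simp only [Matrix.diagonal_mul_diagonal, hab, Matrix.diagonal_one]
  let u : (Matrix ι ι ℝ)ˣ :=
    { val := Matrix.diagonal fun i => (√(w i))⁻¹
      inv := Matrix.diagonal fun i => √(w i)
      val_inv := diagonal_mul_diagonal_eq_one fun i => inv_mul_cancel₀ (sqrt_ne i)
      inv_val := diagonal_mul_diagonal_eq_one fun i => mul_inv_cancel₀ (sqrt_ne i) }
  let N : Matrix ι ι ℝ := u * M * (u⁻¹ : (Matrix ι ι ℝ)ˣ)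
  have spectrum_N : spectrum ℝ N = spectrum ℝ M := spectrum.units_conjugate
  have N_apply (i j : ι) : N i j = M i j * w j / (√(w i) * √(w j)) := by
    have conj_apply : N i j = (√(w i))⁻¹ * M i j * √(w j) :=
      (Matrix.mul_diagonal ..).trans (congrArg (· * √(w j)) (Matrix.diagonal_mul ..))
    rw [conj_apply, eq_div_iff (mul_ne_zero (sqrt_ne i) (sqrt_ne j))]
    have := sqrt_ne i
    field_simp
    rw [Real.sq_sqrt (hw j).le]
  have isHermitian_N : N.IsHermitian := by
    ext i j
    rw [Matrix.conjTranspose_apply, star_trivial, N_apply, N_apply, hM, mul_comm √(w i)]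
  have N_diag := diag_neg_of_isHermitian_of_spectrum_neg isHermitian_N
    (fun r hr => h.neg_of_mem_spectrum (spectrum_N ▸ hr)) i
  rwa [N_apply, Real.mul_self_sqrt (hw i).le, mul_div_cancel_right₀ _ (hw i).ne'] at N_diag

end LinearStability

section Shares

variable {ι : Type*} {α : ℝ} {A S : Finset ι} {i : ι}

/-- The probability that colour `i ∈ A` is reinforced once the set `A` has been drawn, when the
colours have weights `x`. In the model, `x i = v i ^ α`. -/
def share (x : ι → ℝ) (A : Finset ι) (i : ι) : ℝ :=
  x i / ∑ j ∈ A, x j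

theorem share_nonneg {x : ι → ℝ} (hx : ∀ i, 0 ≤ x i) (A : Finset ι) (i : ι) : 0 ≤ share x A i :=
  div_nonneg (hx i) (Finset.sum_nonneg fun j _ => hx j)

theorem share_le_one {x : ι → ℝ} (hx : ∀ i, 0 ≤ x i) (hi : i ∈ A) : share x A i ≤ 1 :=
  div_le_one_of_le₀ (Finset.single_le_sum (fun j _ => hx j) hi)
    (Finset.sum_nonneg fun j _ => hx j)

theorem hasFDerivAt_share {V : Type*} [NormedAddCommGroup V] [NormedSpace ℝ V] {x : V → ι → ℝ}
    {x' : ι → V →L[ℝ] ℝ} {v : V} (hx : ∀ j, HasFDerivAt (fun v => x v j) (x' j) v)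
    (hA : ∑ j ∈ A, x v j ≠ 0) (i : ι) :
    HasFDerivAt (fun v => share (x v) A i)
      ((∑ j ∈ A, x v j)⁻¹ • x' i - (x v i / (∑ j ∈ A, x v j) ^ 2) • ∑ j ∈ A, x' j) v := by
  have sum_inv : HasFDerivAt (fun v => (∑ j ∈ A, x v j)⁻¹)
      (-((∑ j ∈ A, x v j) ^ 2)⁻¹ • ∑ j ∈ A, x' j) v :=
    (hasDerivAt_inv hA).comp_hasFDerivAt v (HasFDerivAt.fun_sum fun j _ => hx j)
  refine ((hx i).mul sum_inv).congr_fderiv ?_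
  module

variable [DecidableEq ι] {v : ι → ℝ}

/-- The powers `v j ^ α` with those outside the face `S` replaced by `0`, which is what they are on
the face. They are analytic wherever `v` is positive on `S`, also across the other coordinate
hyperplanes. -/
def facePow (α : ℝ) (S : Finset ι) (v : ι → ℝ) (j : ι) : ℝ :=
  if j ∈ S then v j ^ α else 0

theorem facePow_eq_rpow (hα : α ≠ 0) (h0 : ∀ j ∉ S, v j = 0) :
    facePow α S v = fun j => v j ^ α := by
  ext j
  by_cases hj : j ∈ S
  · exact if_pos hj
  · rw [facePow, if_neg hj, h0 j hj, Real.zero_rpow hα]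

theorem sum_facePow_pos (hS : ∀ j ∈ S, 0 < v j) (hA : i ∈ A) (hi : i ∈ S) :
    0 < ∑ j ∈ A, facePow α S v j := by
  have facePow_pos {j : ι} (hj : j ∈ S) : 0 < facePow α S v j :=
    (Real.rpow_pos_of_pos (hS j hj) α).trans_eq (if_pos hj).symm
  refine Finset.sum_pos' (fun j _ => ?_) ⟨i, hA, facePow_pos hi⟩
  by_cases hj : j ∈ S
  · exact (facePow_pos hj).le
  · exact (if_neg hj).ge

theorem share_facePow_of_notMem (hi : i ∉ S) : share (facePow α S v) A i = 0 := by
  rw [share, facePow, if_neg hi, zero_div]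

theorem analyticAt_rpow_const {x : ℝ} (hx : 0 < x) : AnalyticAt ℝ (fun y : ℝ => y ^ α) x := by
  have : AnalyticAt ℝ (fun y : ℝ => Real.exp (Real.log y * α)) x :=
    ((analyticAt_log hx).mul analyticAt_const).rexp
  refine this.congr ?_
  filter_upwards [lt_mem_nhds hx] with y hy using (Real.rpow_def_of_pos hy α).symm

theorem hasFDerivAt_facePow [Finite ι] (hα : 1 < α) (h0 : ∀ j ∉ S, v j = 0) (j : ι) :
    HasFDerivAt (fun v => facePow α S v j)
      ((α * v j ^ (α - 1)) • ContinuousLinearMap.proj (R := ℝ) (φ := fun _ : ι => ℝ) j) v := by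
  cases nonempty_fintype ι
  by_cases hj : j ∈ S
  · simp only [facePow, if_pos hj]
    exact (hasFDerivAt_apply j v).rpow_const (Or.inr hα.le)
  · simp only [facePow, if_neg hj, h0 j hj, Real.zero_rpow (sub_pos.2 hα).ne', mul_zero, zero_smul]
    exact hasFDerivAt_const 0 v

theorem hasFDerivAt_share_facePow [Finite ι] (hα : 1 < α) (hS : ∀ j ∈ S, 0 < v j)
    (h0 : ∀ j ∉ S, v j = 0) (hA : i ∈ A) :
    HasFDerivAt (fun v => share (facePow α S v) A i)
      ((∑ j ∈ A, v j ^ α)⁻¹ •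
          (α * v i ^ (α - 1)) • ContinuousLinearMap.proj (R := ℝ) (φ := fun _ : ι => ℝ) i -
        (v i ^ α / (∑ j ∈ A, v j ^ α) ^ 2) •
          ∑ j ∈ A, (α * v j ^ (α - 1)) • ContinuousLinearMap.proj (φ := fun _ : ι => ℝ) j) v := by
  cases nonempty_fintype ι
  by_cases hi : i ∈ S
  · have := hasFDerivAt_share (hasFDerivAt_facePow hα h0) (sum_facePow_pos hS hA hi).ne' i
    rwa [facePow_eq_rpow (zero_lt_one.trans hα).ne' h0] at this
  · simp only [share_facePow_of_notMem hi, h0 i hi, Real.zero_rpow (zero_lt_one.trans hα).ne',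
      Real.zero_rpow (sub_pos.2 hα).ne', mul_zero, zero_smul, smul_zero, zero_div, sub_zero]
    exact hasFDerivAt_const 0 v

variable [Fintype ι]

theorem analyticAt_facePow (hS : ∀ j ∈ S, 0 < v j) (j : ι) :
    AnalyticAt ℝ (fun v => facePow α S v j) v := by
  by_cases hj : j ∈ S
  · simp only [facePow, if_pos hj]
    exact AnalyticAt.fun_comp (g := (· ^ α)) (analyticAt_rpow_const (hS j hj))
      ((ContinuousLinearMap.proj (R := ℝ) (φ := fun _ : ι => ℝ) j).analyticAt v)
  · simp only [facePow, if_neg hj]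
    exact analyticAt_const

theorem analyticAt_share_facePow (hS : ∀ j ∈ S, 0 < v j) (hA : i ∈ A) :
    AnalyticAt ℝ (fun v => share (facePow α S v) A i) v := by
  by_cases hi : i ∈ S
  · exact (analyticAt_facePow hS i).fun_div
      (Finset.analyticAt_fun_sum _ fun j _ => analyticAt_facePow hS j)
      (sum_facePow_pos hS hA hi).ne'
  · simp only [share_facePow_of_notMem hi]
    exact analyticAt_const

end Shares

section Warm

variable {ι : Type*} [Fintype ι] [DecidableEq ι] {α : ℝ} {p : Finset ι → ℝ} {v : ι → ℝ}
  {S : Finset ι}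

theorem warmF_apply (i : ι) :
    warmF α p v i = -v i + ∑ A with i ∈ A, p A * share (fun j => v j ^ α) A i := by
  simp only [warmF, share, mul_div_assoc]

theorem eq_sum_share_of_warmF_eq_zero (hF : warmF α p v = 0) (i : ι) :
    v i = ∑ A with i ∈ A, p A * share (fun j => v j ^ α) A i := by
  have := congrFun hF i
  rw [warmF_apply, Pi.zero_apply] at this
  linarith

theorem le_sum_of_warmF_eq_zero (hp : ∀ A, 0 ≤ p A) (hv : ∀ i, 0 ≤ v i) (hF : warmF α p v = 0)
    (i : ι) : v i ≤ ∑ A, p A := by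
  have rpow_nonneg (j : ι) : 0 ≤ v j ^ α := Real.rpow_nonneg (hv j) α
  calc v i = ∑ A with i ∈ A, p A * share (fun j => v j ^ α) A i :=
        eq_sum_share_of_warmF_eq_zero hF i
    _ ≤ ∑ A with i ∈ A, p A := Finset.sum_le_sum fun A hA =>
        mul_le_of_le_one_right (hp A) (share_le_one rpow_nonneg (Finset.mem_filter.1 hA).2)
    _ ≤ ∑ A, p A := Finset.sum_le_univ_sum_of_nonneg hp

theorem exists_symmetrizing_weight_warmD (hα : 1 < α) (hv : ∀ i, 0 ≤ v i) :
    ∃ w : ι → ℝ, (∀ i, 0 < w i) ∧ ∀ i j, warmD α p v i j * w j = warmD α p v j i * w i := by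
  refine ⟨fun i => if v i = 0 then 1 else v i, fun i => ?_, fun i j => ?_⟩
  · rcases eq_or_ne (v i) 0 with hi | hi
    · exact one_pos.trans_eq (if_pos hi).symm
    · exact ((hv i).lt_of_ne' hi).trans_eq (if_neg hi).symm
  · rcases eq_or_ne i j with rfl | hij
    · rfl
    simp only [warmD, Matrix.of_apply, if_neg hij, if_neg hij.symm, and_comm (a := i ∈ _)]
    have zero_rpow : (0 : ℝ) ^ α = 0 := Real.zero_rpow (zero_lt_one.trans hα).ne'
    have zero_rpow_sub_one : (0 : ℝ) ^ (α - 1) = 0 := Real.zero_rpow (sub_pos.2 hα).ne'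
    by_cases hi : v i = 0
    · simp only [hi, zero_rpow, zero_rpow_sub_one, mul_zero, zero_mul, neg_zero]
    by_cases hj : v j = 0
    · simp only [hj, zero_rpow, zero_rpow_sub_one, mul_zero, zero_mul, neg_zero]
    rw [if_neg hi, if_neg hj, Real.rpow_sub_one hi, Real.rpow_sub_one hj]
    field_simp

theorem mul_warmD_self {i : ι} (hi : v i ≠ 0) (hF : warmF α p v = 0) :
    v i * warmD α p v i i = ∑ A with i ∈ A,
      p A * share (fun j => v j ^ α) A i * (α * (1 - share (fun j => v j ^ α) A i) - 1) := by
  simp only [warmD, Matrix.of_apply, if_true]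
  rw [mul_add, mul_neg_one]
  nth_rw 1 [eq_sum_share_of_warmF_eq_zero hF i]
  rw [Real.rpow_sub_one hi, Finset.mul_sum, Finset.mul_sum, ← Finset.sum_neg_distrib,
    ← Finset.sum_add_distrib]
  refine Finset.sum_congr rfl fun A _ => ?_
  rw [share]
  rcases eq_or_ne (∑ j ∈ A, v j ^ α) 0 with h0 | h0
  · simp only [h0, div_zero, zero_pow two_ne_zero, mul_zero, zero_mul, neg_zero, add_zero]
  · field_simp
    ring

theorem exists_le_apply_of_linStable (hα : 1 < α) (hp : ∀ A, 0 ≤ p A) (hv : ∀ i, 0 ≤ v i)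
    (hF : warmF α p v = 0) (h : LinStable (warmD α p v)) {i : ι} (hi : v i ≠ 0) :
    ∃ A, 0 < p A ∧ (1 - α⁻¹) * p A ≤ v i := by
  obtain ⟨w, w_pos, hw⟩ := exists_symmetrizing_weight_warmD (p := p) hα hv
  have sum_neg := mul_neg_of_pos_of_neg ((hv i).lt_of_ne' hi) (h.diag_neg w_pos hw i)
  rw [mul_warmD_self hi hF] at sum_neg
  obtain ⟨A, hA, term_neg⟩ :=
    Finset.exists_lt_of_sum_lt (sum_neg.trans_eq Finset.sum_const_zero.symm)
  have share_nonneg (A : Finset ι) : 0 ≤ share (fun j => v j ^ α) A i :=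
    share_nonneg (fun j => Real.rpow_nonneg (hv j) α) A i
  have pA_ne : p A ≠ 0 := fun h0 => by simp [h0] at term_neg
  have factor_neg : α * (1 - share (fun j => v j ^ α) A i) - 1 < 0 :=
    neg_of_mul_neg_right term_neg (mul_nonneg (hp A) (share_nonneg A))
  have le_share : 1 - α⁻¹ ≤ share (fun j => v j ^ α) A i := by
    have := (lt_inv_mul_iff₀ (zero_lt_one.trans hα)).2 (sub_neg.1 factor_neg)
    linarith
  refine ⟨A, (hp A).lt_of_ne' pA_ne, ?_⟩
  calc (1 - α⁻¹) * p A ≤ share (fun j => v j ^ α) A i * p A :=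
        mul_le_mul_of_nonneg_right le_share (hp A)
    _ = p A * share (fun j => v j ^ α) A i := mul_comm _ _
    _ ≤ ∑ A with i ∈ A, p A * share (fun j => v j ^ α) A i :=
        Finset.single_le_sum (fun B _ => mul_nonneg (hp B) (share_nonneg B)) hA
    _ = v i := (eq_sum_share_of_warmF_eq_zero hF i).symm

theorem eventually_apply_eq_zero_of_linStable (hα : 1 < α) (hp : ∀ A, 0 ≤ p A) (w : ι → ℝ) :
    ∀ᶠ v in 𝓝 w, (∀ i, 0 ≤ v i) → warmF α p v = 0 → LinStable (warmD α p v) →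
      ∀ i, w i = 0 → v i = 0 := by
  have bound_pos {A : Finset ι} (hA : 0 < p A) : 0 < (1 - α⁻¹) * p A :=
    mul_pos (sub_pos.2 (inv_lt_one_of_one_lt₀ hα)) hA
  have small : ∀ᶠ v in 𝓝 w, ∀ i A, w i = 0 → 0 < p A → v i < (1 - α⁻¹) * p A := by
    simp only [eventually_all]
    exact fun i A hi hA => (continuous_apply i).continuousAt.eventually_lt_const
      (hi.trans_lt (bound_pos hA))
  filter_upwards [small] with v hv_small hv hF h i hi
  by_contra hvi
  obtain ⟨A, hA, le_apply⟩ := exists_le_apply_of_linStable hα hp hv hF h hvi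
  exact (hv_small i A hi hA).not_ge le_apply

/-- The restriction of `warmF α p` to the face `{v | ∀ j ∉ S, v j = 0}`, extended analytically to a
neighbourhood of the points of the face that are positive on `S`. -/
def faceF (α : ℝ) (p : Finset ι → ℝ) (S : Finset ι) (v : ι → ℝ) (i : ι) : ℝ :=
  -v i + ∑ A with i ∈ A, p A * share (facePow α S v) A i

theorem faceF_eq_warmF (hα : α ≠ 0) (h0 : ∀ j ∉ S, v j = 0) : faceF α p S v = warmF α p v := by
  ext i
  rw [faceF, warmF_apply, facePow_eq_rpow hα h0]

theorem analyticAt_faceF (hS : ∀ j ∈ S, 0 < v j) : AnalyticAt ℝ (faceF α p S) v := by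
  refine analyticAt_pi_iff.2 fun i => ?_
  have analyticAt_apply : AnalyticAt ℝ (fun v : ι → ℝ => v i) v :=
    (ContinuousLinearMap.proj (R := ℝ) (φ := fun _ : ι => ℝ) i).analyticAt v
  exact analyticAt_apply.neg.add (Finset.analyticAt_fun_sum _ fun A hA =>
    analyticAt_const.mul (analyticAt_share_facePow hS (Finset.mem_filter.1 hA).2))

theorem warmD_apply (i k : ι) :
    warmD α p v i k = (if i = k then -1 else 0) + ∑ A with i ∈ A, p A *
      ((∑ j ∈ A, v j ^ α)⁻¹ * (if i = k then α * v i ^ (α - 1) else 0) -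
        v i ^ α / (∑ j ∈ A, v j ^ α) ^ 2 * (if k ∈ A then α * v k ^ (α - 1) else 0)) := by
  rcases eq_or_ne i k with rfl | hik
  · simp only [warmD, Matrix.of_apply, if_true]
    rw [Finset.mul_sum]
    congr 1
    refine Finset.sum_congr rfl fun A hA => ?_
    rw [if_pos (Finset.mem_filter.1 hA).2]
    rcases eq_or_ne (∑ j ∈ A, v j ^ α) 0 with h0 | h0
    · simp only [h0, zero_pow two_ne_zero, div_zero, inv_zero, mul_zero, zero_mul, sub_zero]
    · field_simp
  · simp only [warmD, Matrix.of_apply, if_neg hik, mul_zero, zero_sub, zero_add]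
    rw [← Finset.filter_filter, Finset.sum_filter, Finset.mul_sum, ← Finset.sum_neg_distrib]
    refine Finset.sum_congr rfl fun A _ => ?_
    split_ifs <;> ring

theorem warmD_mulVec_apply (h : ι → ℝ) (i : ι) :
    (warmD α p v).mulVec h i = -h i + ∑ A with i ∈ A, p A *
      ((∑ j ∈ A, v j ^ α)⁻¹ * (α * v i ^ (α - 1) * h i) -
        v i ^ α / (∑ j ∈ A, v j ^ α) ^ 2 * ∑ j ∈ A, α * v j ^ (α - 1) * h j) := by
  simp only [Matrix.mulVec, dotProduct, warmD_apply, add_mul, Finset.sum_add_distrib,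
    Finset.sum_mul, ite_mul, neg_one_mul, zero_mul, Finset.sum_ite_eq, Finset.mem_univ, if_true]
  rw [Finset.sum_comm]
  congr 1
  refine Finset.sum_congr rfl fun A _ => ?_
  simp only [mul_assoc (p A), sub_mul, mul_assoc (_⁻¹), mul_assoc (_ / _), ite_mul, zero_mul,
    ← Finset.mul_sum, Finset.sum_sub_distrib, Finset.sum_ite_eq, Finset.mem_univ, if_true,
    Finset.sum_ite_mem, Finset.univ_inter]

theorem hasFDerivAt_faceF (hα : 1 < α) (hS : ∀ j ∈ S, 0 < v j) (h0 : ∀ j ∉ S, v j = 0) :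
    HasFDerivAt (faceF α p S) (Matrix.toLin' (warmD α p v)).toContinuousLinearMap v := by
  refine hasFDerivAt_pi'.2 fun i => ?_
  have hasFDerivAt_apply_i := (hasFDerivAt_apply (𝕜 := ℝ) i v).neg.add
    (HasFDerivAt.fun_sum fun A (hA : A ∈ ({A | i ∈ A} : Finset (Finset ι))) =>
      (hasFDerivAt_share_facePow hα hS h0 (Finset.mem_filter.1 hA).2).const_mul (p A))
  refine hasFDerivAt_apply_i.congr_fderiv (ContinuousLinearMap.ext fun h => ?_)
  simp [warmD_mulVec_apply]

theorem injective_fderiv_faceF (hα : 1 < α) (hS : ∀ j ∈ S, 0 < v j) (h0 : ∀ j ∉ S, v j = 0)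
    (h : LinStable (warmD α p v)) : Function.Injective (fderiv ℝ (faceF α p S) v) := by
  rw [(hasFDerivAt_faceF hα hS h0).fderiv]
  exact Matrix.mulVec_injective_iff_isUnit.2 h.isUnit

theorem finitely_many_stable_equilibria_general (hα : 1 < α) (hp : ∀ A, 0 ≤ p A) :
    {v : ι → ℝ | (∀ i, 0 ≤ v i) ∧ warmF α p v = 0 ∧ LinStable (warmD α p v)}.Finite := by
  set E := {v : ι → ℝ | (∀ i, 0 ≤ v i) ∧ warmF α p v = 0 ∧ LinStable (warmD α p v)}
  have subset_Icc : E ⊆ Set.Icc 0 fun _ => ∑ A, p A :=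
    fun v hv => ⟨hv.1, le_sum_of_warmF_eq_zero hp hv.1 hv.2.1⟩
  by_contra infinite
  obtain ⟨w, hw, accPt⟩ :=
    Set.Infinite.exists_accPt_of_subset_isCompact infinite isCompact_Icc subset_Icc
  let S : Finset ι := {i | w i ≠ 0}
  have w_pos (i : ι) (hi : i ∈ S) : 0 < w i := (hw.1 i).lt_of_ne' (Finset.mem_filter_univ i |>.1 hi)
  refine not_accPt_zeros_of_injective_fderiv (analyticAt_faceF (p := p) (α := α) w_pos)
    (accPt_iff_frequently.2 ?_)
  have pos_on : ∀ᶠ v in 𝓝 w, ∀ i ∈ S, 0 < v i := (Finset.eventually_all S).2 fun i hi =>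
    (continuous_apply i).continuousAt.eventually_const_lt (w_pos i hi)
  have zero_off := eventually_apply_eq_zero_of_linStable hα hp w
  refine ((accPt_iff_frequently.1 accPt).and_eventually (pos_on.and zero_off)).mono ?_
  rintro v ⟨⟨v_ne, nonneg, equilibrium, stable⟩, hS, hzero⟩
  have h0 (i : ι) (hi : i ∉ S) : v i = 0 := hzero nonneg equilibrium stable i <| by
    simpa [S] using hi
  exact ⟨v_ne, (faceF_eq_warmF (zero_lt_one.trans hα).ne' h0).trans equilibrium,
    injective_fderiv_faceF hα hS h0 stable⟩

end Warm

/-- **Theorem (finitely many stable equilibria).** For every `n ≥ 1`, `α > 1`, and every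
WARM weight `p` on `[n]`, the set of linearly stable equilibria is finite. -/
theorem finitely_many_stable_equilibria (n : ℕ) (hn : 1 ≤ n) (α : ℝ) (hα : 1 < α)
    (p : Finset (Fin n) → ℝ) (hp : IsWarmWeight p) :
    {v : Fin n → ℝ |
      InSimplex v ∧ (∀ i, warmF α p v i = 0) ∧ LinStable (warmD α p v)}.Finite :=
  (finitely_many_stable_equilibria_general hα fun A => (hp.2.1 A).1).subset
    fun _ hv => ⟨hv.1.1, funext hv.2.1, hv.2.2⟩

end
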